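/- Let X be a real reflexive Banach space, i.e. a Banach space for which the canonical isometric embedding of X into its double dual X'' is surjective. Then every bounded linear operator T : c₀(ℕ) → X is approximable: T is the limit in operator norm of a sequence of bounded linear operators of finite rank (operators whose range is a finite-dimensional subspace of X). -/

import Mathlib

/-!
Write `x k = T (e k)` for the images of the unit vectors of `c₀`. For every functional `φ` the
series `∑ φ (x k)` converges absolutely, so for each `a` in the cube `[-1, 1]^ℕ` the map
`φ ↦ ∑ a k * φ (x k)` is an element of the double dual; by reflexivity it is evaluation at
a point `f a` of `X` (`exists_weak_sum`). The map `f` from the cube to `X` is continuous for the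
product topology on the cube and the weak topology on `X`, and takes values in the separable
subspace `closure (span (range x))`.

Cover this subspace by countably many closed balls of radius `η`. Closed balls are weakly closed,
so their preimages under `f` are closed, and by Baire's theorem on the compact cube one of them
contains a basic open set, which restricts only the coordinates in a finite set `I`. If `z` in
the unit ball of `c₀` vanishes on `I`, then `T z` is the difference of the values of `f` at two
points of this open set, so `‖T z‖ ≤ 2 * η` (`exists_finset_small`). Hence `T` composed with the
truncations to the first `n` coordinates converges to `T` in operator norm.
-/

open NormedSpace ZeroAtInfty Filter Topology

namespace C0Approx

/-- The `k`-th unit vector of `c₀(ℕ)`. -/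
noncomputable def e (k : ℕ) : C₀(ℕ, ℝ) where
  toFun := Pi.single k 1
  continuous_toFun := continuous_of_discreteTopology
  zero_at_infty' := by
    rw [cocompact_eq_cofinite, Nat.cofinite_eq_atTop]
    refine tendsto_const_nhds.congr' ?_
    filter_upwards [eventually_gt_atTop k] with n hn
    simp [hn.ne']

lemma e_apply (k n : ℕ) : e k n = if n = k then 1 else 0 := by
  change (Pi.single k 1 : ℕ → ℝ) n = _
  simp [Pi.single_apply]

lemma abs_apply_le (z : C₀(ℕ, ℝ)) (k : ℕ) : |z k| ≤ ‖z‖ :=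
  z.toBCF.norm_coe_le_norm k

lemma norm_le_of_forall (z : C₀(ℕ, ℝ)) {C : ℝ} (hC : 0 ≤ C) (h : ∀ k, |z k| ≤ C) : ‖z‖ ≤ C :=
  (BoundedContinuousFunction.norm_le (f := z.toBCF) hC).2 h

lemma sum_e_apply (s : Finset ℕ) (a : ℕ → ℝ) (n : ℕ) :
    (∑ k ∈ s, a k • e k) n = if n ∈ s then a n else 0 := by
  have h : (∑ k ∈ s, a k • e k) n = ∑ k ∈ s, (a k • e k) n := by
    induction s using Finset.induction_on with
    | empty => simp
    | insert i s hi ih => simp [Finset.sum_insert hi, ih]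
  rw [h]
  simp [e_apply]

/-- Evaluation at `k`, as a bounded functional on `c₀(ℕ)`. -/
noncomputable def coord (k : ℕ) : C₀(ℕ, ℝ) →L[ℝ] ℝ :=
  LinearMap.mkContinuous { toFun := fun z => z k, map_add' := by simp, map_smul' := by simp } 1
    (fun z => by simpa using abs_apply_le z k)

lemma coord_apply (k : ℕ) (z : C₀(ℕ, ℝ)) : coord k z = z k := rfl

lemma hasSum_e (z : C₀(ℕ, ℝ)) : HasSum (fun k => z k • e k) z := by
  rw [HasSum, SummationFilter.unconditional_filter, Metric.tendsto_atTop]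
  intro ε hε
  have hz : Tendsto z atTop (𝓝 0) := by
    rw [← Nat.cofinite_eq_atTop, ← cocompact_eq_cofinite]; exact zero_at_infty z
  obtain ⟨N, hN⟩ := Metric.tendsto_atTop.1 hz (ε / 2) (by positivity)
  refine ⟨Finset.range N, fun s hs => ?_⟩
  rw [dist_eq_norm]
  refine (norm_le_of_forall _ (by positivity : 0 ≤ ε / 2) fun k => ?_).trans_lt (half_lt_self hε)
  rw [ZeroAtInftyContinuousMap.sub_apply, sum_e_apply]
  split_ifs with hk
  · simp; positivity
  · have : N ≤ k := by
      by_contra! h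
      exact hk (hs (Finset.mem_range.2 h))
    simpa [Real.dist_eq] using (hN k this).le

variable {X : Type*} [NormedAddCommGroup X] [NormedSpace ℝ X]

/-- Testing `φ ∘ T` on the finitely supported sign vectors bounds the partial sums. -/
lemma sum_abs_le (T : C₀(ℕ, ℝ) →L[ℝ] X) (φ : X →L[ℝ] ℝ) (s : Finset ℕ) :
    ∑ k ∈ s, |φ (T (e k))| ≤ ‖T‖ * ‖φ‖ := by
  set u : C₀(ℕ, ℝ) := ∑ k ∈ s, (SignType.sign (φ (T (e k))) : ℝ) • e k with hu
  have hu1 : ‖u‖ ≤ 1 := by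
    refine norm_le_of_forall _ zero_le_one fun k => ?_
    rw [hu, sum_e_apply]
    split_ifs
    · rcases lt_trichotomy (φ (T (e k))) 0 with h | h | h <;> simp [h]
    · simp
  have h1 : φ (T u) = ∑ k ∈ s, |φ (T (e k))| := by
    simp [hu, map_sum, sign_mul_self]
  rw [← h1]
  calc φ (T u) ≤ ‖φ (T u)‖ := le_abs_self _
    _ ≤ ‖φ‖ * ‖T u‖ := φ.le_opNorm _
    _ ≤ ‖φ‖ * (‖T‖ * 1) := by gcongr; exact T.le_opNorm_of_le hu1
    _ = ‖T‖ * ‖φ‖ := by ring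

lemma summable_abs (T : C₀(ℕ, ℝ) →L[ℝ] X) (φ : X →L[ℝ] ℝ) :
    Summable fun k => |φ (T (e k))| :=
  summable_of_sum_le (fun _ => abs_nonneg _) (sum_abs_le T φ)

lemma abs_mul_le {a : ℕ → ℝ} (ha : ∀ k, |a k| ≤ 1) (r : ℕ → ℝ) (k : ℕ) :
    ‖a k * r k‖ ≤ |r k| := by
  rw [Real.norm_eq_abs, abs_mul]
  exact mul_le_of_le_one_left (abs_nonneg _) (ha k)

/-- In a reflexive space the series `∑ a k • T (e k)` has a weak sum for bounded `a`. -/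
lemma exists_weak_sum (hX : Function.Surjective ⇑(inclusionInDoubleDual ℝ X))
    (T : C₀(ℕ, ℝ) →L[ℝ] X) (a : ℕ → ℝ) (ha : ∀ k, |a k| ≤ 1) :
    ∃ y : X, ∀ φ : X →L[ℝ] ℝ, φ y = ∑' k, a k * φ (T (e k)) := by
  have hs : ∀ φ : X →L[ℝ] ℝ, Summable fun k => a k * φ (T (e k)) := fun φ =>
    (summable_abs T φ).of_norm_bounded (abs_mul_le ha _)
  let L : (X →L[ℝ] ℝ) →ₗ[ℝ] ℝ :=
    { toFun := fun φ => ∑' k, a k * φ (T (e k))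
      map_add' := fun φ ψ => by
        rw [← (hs φ).tsum_add (hs ψ)]
        simp [mul_add]
      map_smul' := fun c φ => by
        simp only [RingHom.id_apply, smul_eq_mul, ← tsum_mul_left]
        congr 1; ext k; simp; ring }
  obtain ⟨y, hy⟩ := hX (L.mkContinuous ‖T‖ fun φ =>
    (tsum_of_norm_bounded (summable_abs T φ).hasSum (abs_mul_le ha _)).trans
      ((summable_abs T φ).tsum_le_of_sum_le (sum_abs_le T φ)))
  refine ⟨y, fun φ => ?_⟩
  rw [← dual_def ℝ X y φ, hy]
  rfl

/-- `T` is uniformly small on the vectors of the unit ball vanishing on a suitable finite set. -/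
lemma exists_finset_small (hX : Function.Surjective ⇑(inclusionInDoubleDual ℝ X))
    (T : C₀(ℕ, ℝ) →L[ℝ] X) {η : ℝ} (hη : 0 < η) :
    ∃ I : Finset ℕ, ∀ z : C₀(ℕ, ℝ), ‖z‖ ≤ 1 → (∀ k ∈ I, z k = 0) → ‖T z‖ ≤ 2 * η := by
  let K := ℕ → Set.Icc (-1 : ℝ) 1
  have hK : ∀ (a : K) k, |(a k : ℝ)| ≤ 1 := fun a k => abs_le.2 (a k).2
  choose f hf using fun a : K => exists_weak_sum hX T (fun k => (a k : ℝ)) (hK a)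
  have hcont : ∀ φ : X →L[ℝ] ℝ, Continuous fun a => φ (f a) := by
    intro φ
    simp only [hf]
    exact continuous_tsum (fun k => by fun_prop) (summable_abs T φ)
      (fun k a => abs_mul_le (hK a) (fun k => φ (T (e k))) k)
  let Y : Submodule ℝ X := (Submodule.span ℝ (Set.range fun k => T (e k))).topologicalClosure
  have hYsep : TopologicalSpace.IsSeparable (Y : Set X) :=
    ((Set.countable_range _).isSeparable.span (R := ℝ)).closure
  -- A functional vanishing on all `T (e k)` vanishes at `f a`, so `f a ∈ Y` by Hahn-Banach.
  have hfY : ∀ a, f a ∈ Y := by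
    intro a
    by_contra hmem
    obtain ⟨φ, u, h1, h2⟩ := geometric_hahn_banach_closed_point (E := X) (s := (Y : Set X))
      Y.convex (Submodule.isClosed_topologicalClosure _) hmem
    have hzero : ∀ y ∈ Y, φ y = 0 := by
      intro y hy
      by_contra hne
      have := h1 (((u + 1) / φ y) • y) (Y.smul_mem _ hy)
      rw [map_smul, smul_eq_mul, div_mul_cancel₀ _ hne] at this
      linarith
    have h0 : φ (f a) = 0 := by
      rw [hf]
      have : ∀ k, φ (T (e k)) = 0 := fun k =>
        hzero _ (Submodule.le_topologicalClosure _ (Submodule.subset_span ⟨k, rfl⟩))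
      simp [this]
    have := h1 0 Y.zero_mem
    rw [map_zero] at this
    linarith
  obtain ⟨c, hc, hYc⟩ := hYsep
  have : Countable c := hc.to_subtype
  have hclosed : ∀ p : c, IsClosed {a : K | ‖f a - p‖ ≤ η} := by
    intro p
    have : {a : K | ‖f a - p‖ ≤ η} =
        ⋂ φ : X →L[ℝ] ℝ, {a | ‖φ (f a) - φ p‖ ≤ η * ‖φ‖} := by
      ext a
      simp only [Set.mem_ofPred_eq, Set.mem_iInter, ← map_sub]
      refine ⟨fun h φ => ?_, fun h => norm_le_dual_bound ℝ _ hη.le h⟩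
      rw [mul_comm]
      exact φ.le_opNorm_of_le h
    rw [this]
    exact isClosed_iInter fun φ =>
      isClosed_le (((hcont φ).sub continuous_const).norm) continuous_const
  have hcover : ⋃ p : c, {a : K | ‖f a - p‖ ≤ η} = Set.univ := by
    rw [Set.eq_univ_iff_forall]
    intro a
    obtain ⟨p, hp, hd⟩ := Metric.mem_closure_iff.1 (hYc (hfY a)) η hη
    rw [dist_eq_norm] at hd
    exact Set.mem_iUnion.2 ⟨⟨p, hp⟩, hd.le⟩
  have : Nonempty K := ⟨fun _ => ⟨0, by norm_num⟩⟩
  obtain ⟨p, a, ha⟩ := nonempty_interior_of_iUnion_of_closed hclosed hcover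
  obtain ⟨I, u, hu, hsub⟩ := isOpen_pi_iff.1 isOpen_interior a ha
  have hnear : ∀ b : K, (∀ k ∈ I, b k = a k) → ‖f b - p‖ ≤ η := by
    intro b hb
    have : b ∈ interior {a : K | ‖f a - p‖ ≤ η} := hsub fun k hk => by
      rw [hb k hk]; exact (hu k hk).2
    have hmem : b ∈ {a : K | ‖f a - p‖ ≤ η} := interior_subset this
    exact hmem
  refine ⟨I, fun z hz hzI => ?_⟩
  classical
  -- `b` and `b'` agree with `a` on `I`; off `I` they are `z` and `0`, so `b - b' = z`.
  let b : K := fun k => if k ∈ I then a k else ⟨z k, abs_le.1 ((abs_apply_le z k).trans hz)⟩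
  let b' : K := fun k => if k ∈ I then a k else ⟨0, by norm_num⟩
  have hb : ‖f b - p‖ ≤ η := hnear b fun k hk => by simp [b, hk]
  have hb' : ‖f b' - p‖ ≤ η := hnear b' fun k hk => by simp [b', hk]
  have hTz : T z = f b - f b' := by
    refine (SeparatingDual.eq_iff_forall_dual_eq (R := ℝ)).2 fun φ => ?_
    have hs : ∀ b : K, Summable fun k => (b k : ℝ) * φ (T (e k)) := fun b =>
      (summable_abs T φ).of_norm_bounded (abs_mul_le (hK b) _)
    rw [map_sub, hf, hf, ← (hs b).tsum_sub (hs b')]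
    have h := ((hasSum_e z).mapL (φ.comp T)).tsum_eq
    simp only [ContinuousLinearMap.comp_apply] at h
    rw [← h]
    congr 1; ext k
    by_cases hk : k ∈ I
    · simp [b, b', hk, hzI k hk]
    · simp [b, b', hk]
  calc ‖T z‖ = ‖(f b - p) - (f b' - p)‖ := by rw [hTz]; congr 1; abel
    _ ≤ ‖f b - p‖ + ‖f b' - p‖ := norm_sub_le _ _
    _ ≤ 2 * η := by linarith

end C0Approx

open C0Approx in
/-- If `X` is a reflexive real Banach space (the canonical embedding into the double dual is
surjective), then every bounded linear operator `T : c₀(ℕ) → X` is the operator-norm limit of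
a sequence of finite-rank bounded operators. -/
theorem operator_c0_approximable_of_reflexive
    (X : Type*) [NormedAddCommGroup X] [NormedSpace ℝ X] [CompleteSpace X]
    (hX : Function.Surjective ⇑(inclusionInDoubleDual ℝ X))
    (T : C₀(ℕ, ℝ) →L[ℝ] X) :
    ∃ F : ℕ → (C₀(ℕ, ℝ) →L[ℝ] X),
      (∀ m, FiniteDimensional ℝ (LinearMap.range ((F m : C₀(ℕ, ℝ) →ₗ[ℝ] X)))) ∧
      Tendsto (fun m => ‖T - F m‖) atTop (𝓝 0) := by
  -- `F m` is `T` composed with the truncation to the first `m` coordinates.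
  let F : ℕ → (C₀(ℕ, ℝ) →L[ℝ] X) := fun m =>
    ∑ k ∈ Finset.range m, (coord k).smulRight (T (e k))
  have hF : ∀ m z, F m z = ∑ k ∈ Finset.range m, z k • T (e k) := fun m z => by
    simp [F, coord_apply]
  refine ⟨F, fun m => ?_, ?_⟩
  · have hle : LinearMap.range (F m : C₀(ℕ, ℝ) →ₗ[ℝ] X) ≤
        Submodule.span ℝ ((fun k => T (e k)) '' (Finset.range m : Set ℕ)) := by
      rintro _ ⟨z, rfl⟩
      rw [ContinuousLinearMap.coe_coe, hF]
      exact Submodule.sum_mem _ fun k hk =>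
        Submodule.smul_mem _ _ (Submodule.subset_span ⟨k, hk, rfl⟩)
    have := FiniteDimensional.span_of_finite ℝ
      ((Finset.range m).finite_toSet.image fun k => T (e k))
    exact Submodule.finiteDimensional_of_le hle
  · rw [Metric.tendsto_atTop]
    intro ε hε
    obtain ⟨I, hI⟩ := exists_finset_small hX T (η := ε / 4) (by positivity)
    obtain ⟨N, hN⟩ := I.exists_nat_subset_range
    refine ⟨N, fun m hm => ?_⟩
    rw [dist_zero_right, Real.norm_of_nonneg (ContinuousLinearMap.opNorm_nonneg _)]
    refine (ContinuousLinearMap.opNorm_le_of_unit_norm (by positivity : 0 ≤ ε / 2)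
      fun z hz => ?_).trans_lt (half_lt_self hε)
    set w : C₀(ℕ, ℝ) := z - ∑ k ∈ Finset.range m, z k • e k with hw
    have hwk : ∀ k, w k = if k ∈ Finset.range m then 0 else z k := fun k => by
      rw [hw, ZeroAtInftyContinuousMap.sub_apply, sum_e_apply]
      split_ifs <;> simp
    have hTw : (T - F m) z = T w := by
      simp [hw, hF, map_sum]
    rw [hTw]
    refine (hI w (norm_le_of_forall _ zero_le_one fun k => ?_) fun k hk => ?_).trans_eq (by ring)
    · rw [hwk]
      split_ifs
      · simp
      · exact (abs_apply_le z k).trans hz.le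
    · rw [hwk, if_pos]
      exact Finset.mem_range.2 ((Finset.mem_range.1 (hN hk)).trans_le hm)
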